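/- Let Ω ⊆ ℝ^d be open. Then the subalgebra of sublinear generalized functions is dense in 𝒢(Ω) with respect to the sharp topology. -/

import Mathlib

open Filter MeasureTheory Metric Set
open scoped Topology BigOperators

noncomputable section

/-- Euclidean space ℝ^d. -/
abbrev Euc (d : ℕ) : Type := EuclideanSpace ℝ (Fin d)

variable {d : ℕ}

/-- "P ε holds for small ε". -/
def SmallE (P : ℝ → Prop) : Prop :=
  ∃ ε₀ : ℝ, 0 < ε₀ ∧ ∀ ε : ℝ, 0 < ε → ε < ε₀ → P ε

/-- Directional derivative ∂ₑ u in the direction e. -/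
def pderivDir {F : Type} [NormedAddCommGroup F] [NormedSpace ℝ F]
    (e : Euc d) (u : Euc d → F) : Euc d → F :=
  fun x => fderiv ℝ u x e

/-- Multi-index partial derivative ∂^α u. -/
def partialDeriv {F : Type} [NormedAddCommGroup F] [NormedSpace ℝ F]
    (α : Fin d → ℕ) (u : Euc d → F) : Euc d → F :=
  (List.finRange d).foldr
    (fun i v => (pderivDir (EuclideanSpace.single i (1 : ℝ)))^[α i] v) u

/-- p_{α,K}(u) = sup_{x ∈ K} |∂^α u(x)|. -/
def pSemi {F : Type} [NormedAddCommGroup F] [NormedSpace ℝ F]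
    (α : Fin d → ℕ) (K : Set (Euc d)) (u : Euc d → F) : ℝ :=
  sSup ((fun x => ‖partialDeriv α u x‖) '' K)

/-- p_{k,K}(u) = max_{|α| = k} p_{α,K}(u). -/
def pSemiK {F : Type} [NormedAddCommGroup F] [NormedSpace ℝ F]
    (k : ℕ) (K : Set (Euc d)) (u : Euc d → F) : ℝ :=
  sSup {y : ℝ | ∃ α : Fin d → ℕ, (∑ i, α i) = k ∧ y = pSemi α K u}

/-- Moderate nets of smooth functions on Ω. -/
def Moderate (Ω : Set (Euc d)) (u : ℝ → Euc d → ℂ) : Prop :=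
  (∀ ε ∈ Set.Ioo (0:ℝ) 1, ContDiffOn ℝ (⊤ : ℕ∞) (u ε) Ω) ∧
  ∀ K : Set (Euc d), IsCompact K → K ⊆ Ω → ∀ α : Fin d → ℕ,
    ∃ N : ℕ, SmallE fun ε => pSemi α K (u ε) ≤ ε ^ (-(N : ℝ))

/-- Negligible nets of smooth functions on Ω. -/
def Negligible (Ω : Set (Euc d)) (u : ℝ → Euc d → ℂ) : Prop :=
  (∀ ε ∈ Set.Ioo (0:ℝ) 1, ContDiffOn ℝ (⊤ : ℕ∞) (u ε) Ω) ∧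
  ∀ K : Set (Euc d), IsCompact K → K ⊆ Ω → ∀ α : Fin d → ℕ, ∀ m : ℕ,
    SmallE fun ε => pSemi α K (u ε) ≤ ε ^ (m : ℝ)

/-- The algebra of moderate nets. -/
abbrev ModNet (Ω : Set (Euc d)) : Type := {u : ℝ → Euc d → ℂ // Moderate Ω u}

/-- Two moderate nets are identified when their difference is negligible. -/
def nulRel (Ω : Set (Euc d)) (u v : ModNet Ω) : Prop :=
  Negligible Ω (fun ε x => u.1 ε x - v.1 ε x)

/-- The special Colombeau algebra 𝒢(Ω). -/
abbrev Colombeau (Ω : Set (Euc d)) : Type := Quot (nulRel Ω)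

/-- The valuation of a net of complex numbers, with values in EReal
(⊤ corresponding to nets with arbitrarily good decay). -/
def valuation (z : ℝ → ℂ) : EReal :=
  sSup ((fun b : ℝ => (b : EReal)) '' {b : ℝ | SmallE fun ε => ‖z ε‖ ≤ ε ^ b})

/-- The sharp norm e^{-v(z)} of a net of complex numbers. -/
def sharpNorm (z : ℝ → ℂ) : ℝ :=
  if valuation z = ⊤ then 0 else Real.exp (-(valuation z).toReal)

/-- P_{k,K}(u) = ‖(p_{k,K}(u_ε))_ε‖ (computed via a representative;
independent of the representative). -/
def PNorm (Ω : Set (Euc d)) (k : ℕ) (K : Set (Euc d)) (u : Colombeau Ω) : ℝ :=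
  sharpNorm fun ε => ((pSemiK k K ((Quot.out u).1 ε) : ℝ) : ℂ)

/-- P_{α,K}(u) = ‖(p_{α,K}(u_ε))_ε‖ for a multi-index α. -/
def PNormA (Ω : Set (Euc d)) (α : Fin d → ℕ) (K : Set (Euc d)) (u : Colombeau Ω) : ℝ :=
  sharpNorm fun ε => ((pSemi α K ((Quot.out u).1 ε) : ℝ) : ℂ)

/-- The ultra-pseudo-seminorm P_{α,K} applied to the difference u - v. -/
def PNormDiff (Ω : Set (Euc d)) (α : Fin d → ℕ) (K : Set (Euc d))
    (u v : Colombeau Ω) : ℝ :=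
  sharpNorm fun ε =>
    ((pSemi α K (fun x => (Quot.out u).1 ε x - (Quot.out v).1 ε x) : ℝ) : ℂ)

/-- The sharp topology on 𝒢(Ω): generated by the balls of the
ultra-pseudo-seminorms P_{α,K}. -/
def sharpTopology (Ω : Set (Euc d)) : TopologicalSpace (Colombeau Ω) :=
  TopologicalSpace.generateFrom
    {S | ∃ (u : Colombeau Ω) (α : Fin d → ℕ) (K : Set (Euc d)) (r : ℝ),
      IsCompact K ∧ K ⊆ Ω ∧ 0 < r ∧ S = {v | PNormDiff Ω α K u v < r}}

/-- K satisfies the segment condition: there is r > 0 such that every x ∈ K lies on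
d line segments of length r, in linearly independent (unit) directions, contained in K. -/
def SegmentCond (K : Set (Euc d)) : Prop :=
  ∃ r : ℝ, 0 < r ∧ ∀ x ∈ K, ∃ e : Fin d → Euc d, LinearIndependent ℝ e ∧
    ∀ i : Fin d, ‖e i‖ = 1 ∧ ∃ a : ℝ, a ≤ 0 ∧ 0 ≤ a + r ∧
      ∀ t : ℝ, a ≤ t → t ≤ a + r → x + t • e i ∈ K

/-- 𝒢^∞(K). -/
def GInfK (Ω : Set (Euc d)) (K : Set (Euc d)) : Set (Colombeau Ω) :=
  {u | ∃ v : ModNet Ω, Quot.mk (nulRel Ω) v = u ∧ ∃ N : ℕ,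
    ∀ α : Fin d → ℕ, SmallE fun ε => pSemi α K (v.1 ε) ≤ ε ^ (-(N : ℝ))}

/-- 𝒢^{L,a}(K), the generalized functions of sublinear growth with slope
smaller than a on K. -/
def GLaK (Ω : Set (Euc d)) (a : ℝ) (K : Set (Euc d)) : Set (Colombeau Ω) :=
  {u | ∃ v : ModNet Ω, Quot.mk (nulRel Ω) v = u ∧ ∃ a' : ℝ, a' < a ∧ ∃ b : ℝ,
    ∀ α : Fin d → ℕ,
      SmallE fun ε => pSemi α K (v.1 ε) ≤ ε ^ (-(a' * (∑ i, (α i : ℝ))) - b)}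

/-- 𝒢^{L,0}(K) = ⋂_{a>0} 𝒢^{L,a}(K). -/
def GL0K (Ω : Set (Euc d)) (K : Set (Euc d)) : Set (Colombeau Ω) :=
  {u | ∀ a : ℝ, 0 < a → u ∈ GLaK Ω a K}

/-- 𝒢^∞(Ω) = ⋂_{K⊂⊂Ω} 𝒢^∞(K). -/
def GInfOmega (Ω : Set (Euc d)) : Set (Colombeau Ω) :=
  {u | ∀ K : Set (Euc d), IsCompact K → K ⊆ Ω → u ∈ GInfK Ω K}

/-- 𝒢^{L,a}(Ω) = ⋂_{K⊂⊂Ω} 𝒢^{L,a}(K). -/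
def GLaOmega (Ω : Set (Euc d)) (a : ℝ) : Set (Colombeau Ω) :=
  {u | ∀ K : Set (Euc d), IsCompact K → K ⊆ Ω → u ∈ GLaK Ω a K}

/-- 𝒢^{L,0}(Ω) = ⋂_{K⊂⊂Ω} 𝒢^{L,0}(K). -/
def GL0Omega (Ω : Set (Euc d)) : Set (Colombeau Ω) :=
  {u | ∀ K : Set (Euc d), IsCompact K → K ⊆ Ω → u ∈ GL0K Ω K}

/-- u ∈ 𝒢(Ω) is sublinear. -/
def Sublinear (Ω : Set (Euc d)) (u : Colombeau Ω) : Prop :=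
  ∃ v : ModNet Ω, Quot.mk (nulRel Ω) v = u ∧
    ∀ K : Set (Euc d), IsCompact K → K ⊆ Ω →
      ∀ x : ℝ → Euc d, (∀ ε ∈ Set.Ioo (0:ℝ) 1, x ε ∈ K) →
        ∃ k : ℝ, ∃ p : ℕ → ℝ,
          Filter.Tendsto (fun n : ℕ => p n + k * n) atTop atTop ∧
          ∀ α : Fin d → ℕ,
            SmallE fun ε => ‖partialDeriv α (v.1 ε) (x ε)‖ ≤ ε ^ (p (∑ i, α i))

/-- The scaled mollifier ψ_δ(x) = δ^{-d} ψ(x/δ). -/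
def mollify (ψ : Euc d → ℝ) (δ : ℝ) : Euc d → ℝ :=
  fun x => ((δ : ℝ) ^ d)⁻¹ * ψ (δ⁻¹ • x)

/-- Convolution u ⋆ ψ (with a real-valued kernel ψ). -/
def conv (u : Euc d → ℂ) (ψ : Euc d → ℝ) : Euc d → ℂ :=
  fun x => ∫ t : Euc d, u (x - t) * ((ψ t : ℝ) : ℂ)

/-- 𝒢_c(Ω): compactly supported generalized functions (restriction to Ω∖K
is 0 in 𝒢(Ω∖K), i.e. some representative is negligible on Ω∖K). -/
def GCompact (Ω : Set (Euc d)) : Set (Colombeau Ω) :=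
  {u | ∃ v : ModNet Ω, Quot.mk (nulRel Ω) v = u ∧
    ∃ K : Set (Euc d), IsCompact K ∧ K ⊆ Ω ∧ Negligible (Ω \ K) v.1}

theorem smallE_iff {P : ℝ → Prop} : SmallE P ↔ ∀ᶠ ε in 𝓝[>] (0:ℝ), P ε := by
  constructor
  · rintro ⟨e, he, h⟩
    filter_upwards [Ioo_mem_nhdsGT he] with x hx using h x hx.1 hx.2
  · intro h
    obtain ⟨e, he, h⟩ := mem_nhdsGT_iff_exists_Ioo_subset.1 h
    exact ⟨e, he, fun x h0 h1 => h ⟨h0, h1⟩⟩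

theorem ev_Ioo : ∀ᶠ ε in 𝓝[>] (0:ℝ), ε ∈ Ioo (0:ℝ) 1 := Ioo_mem_nhdsGT one_pos

theorem ev_const_mul (C : ℝ) {b b' : ℝ} (h : b' < b) :
    ∀ᶠ ε in 𝓝[>] (0:ℝ), C * ε ^ b ≤ ε ^ b' := by
  have h1 : Tendsto (fun ε : ℝ => C * ε ^ (b - b')) (𝓝[>] 0) (𝓝 0) := by
    have : Tendsto (fun ε : ℝ => ε ^ (b - b')) (𝓝[>] 0) (𝓝 0) := by
      have := (Real.continuousAt_rpow_const (0:ℝ) (b-b') (Or.inr (by linarith))).tendsto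
      rw [Real.zero_rpow (by linarith)] at this
      exact this.mono_left nhdsWithin_le_nhds
    simpa using this.const_mul C
  filter_upwards [ev_Ioo, h1.eventually_le_const (one_pos)] with ε h0 h2
  have h3 : ε ^ b = ε ^ (b - b') * ε ^ b' := by
    rw [← Real.rpow_add h0.1]; congr 1; ring
  rw [h3, ← mul_assoc]
  have := Real.rpow_nonneg h0.1.le b'
  nlinarith

section CalcPart
variable {F : Type} [NormedAddCommGroup F] [NormedSpace ℝ F]

def Dl (l : List (Fin d)) (f : Euc d → F) : Euc d → F :=
  l.foldr (fun i v => pderivDir (EuclideanSpace.single i (1 : ℝ)) v) f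

def mlist (α : Fin d → ℕ) : List (Fin d) :=
  (List.finRange d).flatMap (fun i => List.replicate (α i) i)

@[simp] theorem Dl_nil (f : Euc d → F) : Dl [] f = f := rfl
@[simp] theorem Dl_cons (i : Fin d) (l : List (Fin d)) (f : Euc d → F) :
    Dl (i :: l) f = pderivDir (EuclideanSpace.single i (1 : ℝ)) (Dl l f) := rfl
theorem Dl_append (l l' : List (Fin d)) (f : Euc d → F) :
    Dl (l ++ l') f = Dl l (Dl l' f) := by simp [Dl]

theorem Dl_replicate (n : ℕ) (i : Fin d) (f : Euc d → F) :
    Dl (List.replicate n i) f = (pderivDir (EuclideanSpace.single i (1 : ℝ)))^[n] f := by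
  induction n with
  | zero => rfl
  | succ n ih => rw [List.replicate_succ, Dl_cons, ih, Function.iterate_succ_apply']

theorem partialDeriv_eq (α : Fin d → ℕ) (f : Euc d → F) :
    partialDeriv α f = Dl (mlist α) f := by
  unfold partialDeriv mlist
  induction List.finRange d with
  | nil => rfl
  | cons i l ih => rw [List.foldr_cons, ih, List.flatMap_cons, Dl_append, Dl_replicate]

theorem mlist_count (α : Fin d → ℕ) (i : Fin d) : (mlist α).count i = α i := by
  unfold mlist
  rw [List.count_flatMap, ← Fin.sum_univ_def]
  simp [List.count_replicate]

theorem mlist_length (α : Fin d → ℕ) : (mlist α).length = ∑ i, α i := by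
  unfold mlist
  rw [List.length_flatMap, ← Fin.sum_univ_def]
  simp

theorem mlist_perm (l : List (Fin d)) : l.Perm (mlist (fun i => l.count i)) := by
  rw [List.perm_iff_count]
  intro i
  rw [mlist_count]

variable {U : Set (Euc d)}

theorem pderivDir_contDiffOn (hU : IsOpen U) {f : Euc d → F} (hf : ContDiffOn ℝ (⊤ : ℕ∞) f U)
    (e : Euc d) : ContDiffOn ℝ (⊤ : ℕ∞) (pderivDir e f) U := by
  have := hf.fderiv_of_isOpen hU (m := (⊤ : ℕ∞)) (by simp)
  exact this.clm_apply contDiffOn_const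

theorem Dl_contDiffOn (hU : IsOpen U) {f : Euc d → F} (hf : ContDiffOn ℝ (⊤ : ℕ∞) f U)
    (l : List (Fin d)) : ContDiffOn ℝ (⊤ : ℕ∞) (Dl l f) U := by
  induction l with
  | nil => exact hf
  | cons i l ih => exact pderivDir_contDiffOn hU ih _

theorem pderivDir_congr (hU : IsOpen U) {f g : Euc d → F} (h : EqOn f g U) (e : Euc d) :
    EqOn (pderivDir e f) (pderivDir e g) U := by
  intro x hx
  have : f =ᶠ[𝓝 x] g := by filter_upwards [hU.mem_nhds hx] with y hy using h hy
  simp [pderivDir, this.fderiv_eq]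

theorem Dl_congr (hU : IsOpen U) {f g : Euc d → F} (h : EqOn f g U) (l : List (Fin d)) :
    EqOn (Dl l f) (Dl l g) U := by
  induction l with
  | nil => exact h
  | cons i l ih => exact pderivDir_congr hU ih _

theorem Dl_sub (hU : IsOpen U) {f g : Euc d → F} (hf : ContDiffOn ℝ (⊤ : ℕ∞) f U)
    (hg : ContDiffOn ℝ (⊤ : ℕ∞) g U) (l : List (Fin d)) :
    EqOn (Dl l (fun x => f x - g x)) (fun x => Dl l f x - Dl l g x) U := by
  induction l with
  | nil => intro x hx; rfl
  | cons i l ih =>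
    intro x hx
    rw [Dl_cons, pderivDir_congr hU ih _ hx]
    have h1 := ((Dl_contDiffOn hU hf l).contDiffAt (hU.mem_nhds hx)).differentiableAt (by simp)
    have h2 := ((Dl_contDiffOn hU hg l).contDiffAt (hU.mem_nhds hx)).differentiableAt (by simp)
    simp only [pderivDir, Dl_cons]
    rw [fderiv_fun_sub h1 h2]
    rfl

theorem pderivDir_comm (hU : IsOpen U) {f : Euc d → F} (hf : ContDiffOn ℝ (⊤ : ℕ∞) f U)
    (e e' : Euc d) : EqOn (pderivDir e (pderivDir e' f)) (pderivDir e' (pderivDir e f)) U := by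
  intro x hx
  have h0 := hf.contDiffAt (hU.mem_nhds hx)
  have h := h0.isSymmSndFDerivAt (by simpa using (show ((2:ℕ∞) : WithTop ℕ∞) ≤ ((⊤ : ℕ∞) : WithTop ℕ∞) from WithTop.coe_le_coe.2 le_top))
  have h1 : DifferentiableAt ℝ (fderiv ℝ f) x :=
    (h0.fderiv_right (m := (⊤ : ℕ∞)) (by simp)).differentiableAt (by simp)
  have key : ∀ e : Euc d, ∀ e', fderiv ℝ (fun y => fderiv ℝ f y e') x e = fderiv ℝ (fderiv ℝ f) x e e' := by
    intro e e'
    rw [fderiv_clm_apply h1 (differentiableAt_const _)]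
    simp
  unfold pderivDir
  rw [key, key]
  exact h e e'

theorem Dl_perm (hU : IsOpen U) {f : Euc d → F} (hf : ContDiffOn ℝ (⊤ : ℕ∞) f U)
    {l l' : List (Fin d)} (h : l.Perm l') : EqOn (Dl l f) (Dl l' f) U := by
  induction h with
  | nil => exact fun _ _ => rfl
  | cons i _ ih => exact pderivDir_congr hU ih _
  | swap i j l => exact pderivDir_comm hU (Dl_contDiffOn hU hf l) _ _
  | trans _ _ h1 h2 => exact h1.trans h2

theorem contDiff_Dl {f : Euc d → F} (hf : ContDiff ℝ (⊤ : ℕ∞) f) (l : List (Fin d)) :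
    ContDiff ℝ (⊤ : ℕ∞) (Dl l f) :=
  contDiffOn_univ.1 (Dl_contDiffOn isOpen_univ hf.contDiffOn l)

theorem pderivDir_compact {f : Euc d → F} (hf : HasCompactSupport f) (e : Euc d) :
    HasCompactSupport (pderivDir e f) := hf.fderiv_apply ℝ e

theorem Dl_compact {f : Euc d → F} (hf : HasCompactSupport f) (l : List (Fin d)) :
    HasCompactSupport (Dl l f) := by
  induction l with
  | nil => exact hf
  | cons i l ih => exact pderivDir_compact ih _

theorem norm_clm_le (A : Euc d →L[ℝ] F) {C : ℝ} 
    (h : ∀ i, ‖A (EuclideanSpace.single i (1:ℝ))‖ ≤ C) : ‖A‖ ≤ d * C := by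
  rcases Nat.eq_zero_or_pos d with rfl | hd
  · have : A = 0 := by ext x; simp [Subsingleton.elim x 0]
    simp [this]
  have hC : 0 ≤ C := (norm_nonneg _).trans (h ⟨0, hd⟩)
  refine A.opNorm_le_bound (by positivity) fun x => ?_
  have hx : x = ∑ i, x i • EuclideanSpace.single i (1:ℝ) := by
    ext j; simp [Finset.sum_apply, Pi.single_apply]
  have : A x = ∑ i, x i • A (EuclideanSpace.single i (1:ℝ)) := by
    conv_lhs => rw [hx]
    simp [map_sum]
  rw [this]
  refine (norm_sum_le _ _).trans ?_
  have : ∀ i ∈ Finset.univ, ‖x i • A (EuclideanSpace.single i (1:ℝ))‖ ≤ ‖x‖ * C := by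
    intro i _
    rw [norm_smul]
    exact mul_le_mul (PiLp.norm_apply_le x i) (h i) (norm_nonneg _) (norm_nonneg _)
  refine (Finset.sum_le_sum this).trans ?_
  simp
  linarith

theorem Dl_scale {f : Euc d → F} (hf : ContDiff ℝ (⊤ : ℕ∞) f) (a c : ℝ) (l : List (Fin d)) :
    Dl l (fun x => a • f (c • x)) = fun x => (a * c ^ l.length) • Dl l f (c • x) := by
  induction l with
  | nil => simp
  | cons i l ih =>
    rw [Dl_cons, ih]
    funext x
    have h1 : DifferentiableAt ℝ (Dl l f) (c • x) :=
      (contDiff_Dl hf l).contDiffAt.differentiableAt (by simp)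
    have h2 : HasFDerivAt (fun x : Euc d => c • x) (c • ContinuousLinearMap.id ℝ (Euc d)) x :=
      (hasFDerivAt_id x).const_smul c
    have h3 := (h1.hasFDerivAt.comp x h2).const_smul (a * c ^ l.length)
    simp only [pderivDir, Dl_cons]
    have h4 : (fun x => (a * c ^ l.length) • Dl l f (c • x)) =
      ((a * c ^ l.length) • (Dl l f ∘ fun x => c • x)) := rfl
    rw [h4, h3.fderiv]
    simp [smul_smul, pow_succ, mul_assoc]

end CalcPart
open scoped Convolution

theorem pderiv_conv_right {f : Euc d → ℝ} {g : Euc d → ℂ} (hf : Continuous f)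
    (hg : ContDiff ℝ (⊤ : ℕ∞) g) (hc : HasCompactSupport g) (e : Euc d) :
    pderivDir e (f ⋆[ContinuousLinearMap.lsmul ℝ ℝ, volume] g) =
      (f ⋆[ContinuousLinearMap.lsmul ℝ ℝ, volume] (pderivDir e g)) := by
  funext x
  unfold pderivDir
  rw [(hc.hasFDerivAt_convolution_right _ hf.locallyIntegrable (hg.of_le (by exact_mod_cast le_top)) x).fderiv]
  exact convolution_precompR_apply _ hf.locallyIntegrable (hc.fderiv ℝ)
    (hg.continuous_fderiv (by simp)) x e

theorem Dl_conv_right {f : Euc d → ℝ} {g : Euc d → ℂ} (hf : Continuous f)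
    (hg : ContDiff ℝ (⊤ : ℕ∞) g) (hc : HasCompactSupport g) (l : List (Fin d)) :
    Dl l (f ⋆[ContinuousLinearMap.lsmul ℝ ℝ, volume] g) =
      (f ⋆[ContinuousLinearMap.lsmul ℝ ℝ, volume] (Dl l g)) := by
  induction l with
  | nil => rfl
  | cons i l ih => rw [Dl_cons, ih, pderiv_conv_right hf (contDiff_Dl hg l) (Dl_compact hc l)]; rfl

theorem pderiv_conv_left {f : Euc d → ℝ} {g : Euc d → ℂ} (hg : Continuous g)
    (hf : ContDiff ℝ (⊤ : ℕ∞) f) (hc : HasCompactSupport f) (e : Euc d) :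
    pderivDir e (f ⋆[ContinuousLinearMap.lsmul ℝ ℝ, volume] g) =
      ((pderivDir e f) ⋆[ContinuousLinearMap.lsmul ℝ ℝ, volume] g) := by
  funext x
  unfold pderivDir
  simp +singlePass only [← convolution_flip]
  rw [(hc.hasFDerivAt_convolution_right _ hg.locallyIntegrable (hf.of_le (by exact_mod_cast le_top)) x).fderiv]
  exact convolution_precompR_apply _ hg.locallyIntegrable (hc.fderiv ℝ)
    (hf.continuous_fderiv (by simp)) x e

theorem Dl_conv_left {f : Euc d → ℝ} {g : Euc d → ℂ} (hg : Continuous g)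
    (hf : ContDiff ℝ (⊤ : ℕ∞) f) (hc : HasCompactSupport f) (l : List (Fin d)) :
    Dl l (f ⋆[ContinuousLinearMap.lsmul ℝ ℝ, volume] g) =
      ((Dl l f) ⋆[ContinuousLinearMap.lsmul ℝ ℝ, volume] g) := by
  induction l with
  | nil => rfl
  | cons i l ih => rw [Dl_cons, ih, pderiv_conv_left hg (contDiff_Dl hf l) (Dl_compact hc l)]; rfl

theorem conv_bound {f : Euc d → ℝ} {g : Euc d → ℂ} {S : Set (Euc d)} (hS : IsCompact S)
    {A B : ℝ} (hA : ∀ x, ‖f x‖ ≤ A) (hB : ∀ x ∈ S, ‖g x‖ ≤ B) (hz : ∀ x ∉ S, g x = 0) (x : Euc d) :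
    ‖(f ⋆[ContinuousLinearMap.lsmul ℝ ℝ, volume] g) x‖ ≤ A * B * volume.real S := by
  rw [convolution_lsmul_swap]
  have hA0 : 0 ≤ A := (norm_nonneg _).trans (hA 0)
  rw [← setIntegral_eq_integral_of_forall_compl_eq_zero (s := S)
    (fun t ht => by rw [hz t ht, smul_zero])]
  refine norm_setIntegral_le_of_norm_le_const hS.measure_lt_top fun t ht => ?_
  rw [norm_smul]
  exact mul_le_mul (hA _) (hB t ht) (norm_nonneg _) hA0

theorem exists_kernel (d : ℕ) : ∃ φ : Euc d → ℝ, ContDiff ℝ (⊤ : ℕ∞) φ ∧ HasCompactSupport φ ∧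
    (∀ x, 0 ≤ φ x) ∧ ∫ x, φ x = 1 ∧ Function.support φ ⊆ ball 0 1 := by
  let b : ContDiffBump (0 : Euc d) := ⟨1/2, 1, by norm_num, by norm_num⟩
  refine ⟨b.normed volume, b.contDiff_normed, b.hasCompactSupport_normed, b.nonneg_normed,
    b.integral_normed, ?_⟩
  rw [b.support_normed_eq]

theorem mollify_integral {φ : Euc d → ℝ} (h1 : ∫ x, φ x = 1) {δ : ℝ} (hδ : 0 < δ) :
    ∫ x, mollify φ δ x = 1 := by
  unfold mollify
  rw [integral_const_mul, Measure.integral_comp_inv_smul_of_nonneg _ _ hδ.le, h1]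
  have : δ ^ d ≠ 0 := by positivity
  simp [this]

theorem mollify_support {φ : Euc d → ℝ} (h1 : Function.support φ ⊆ ball 0 1) {δ : ℝ} (hδ : 0 < δ) :
    Function.support (mollify φ δ) ⊆ ball 0 δ := by
  intro x hx
  have : φ (δ⁻¹ • x) ≠ 0 := fun h => hx (by simp [mollify, h])
  have := h1 this
  rw [mem_ball_zero_iff, norm_smul, norm_inv, Real.norm_of_nonneg hδ.le] at this
  rw [mem_ball_zero_iff]
  rwa [inv_mul_lt_iff₀ hδ, mul_one] at this

theorem mollify_contDiff {φ : Euc d → ℝ} (h : ContDiff ℝ (⊤ : ℕ∞) φ) (δ : ℝ) :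
    ContDiff ℝ (⊤ : ℕ∞) (mollify φ δ) := by
  unfold mollify
  exact contDiff_const.mul (h.comp (contDiff_const_smul δ⁻¹))

theorem mollify_compact {φ : Euc d → ℝ} (h1 : Function.support φ ⊆ ball 0 1) {δ : ℝ} (hδ : 0 < δ) :
    HasCompactSupport (mollify φ δ) := by
  refine HasCompactSupport.intro (isCompact_closedBall (0 : Euc d) δ) fun x hx => ?_
  by_contra h
  exact hx (ball_subset_closedBall (mollify_support h1 hδ h))

theorem mollify_Dl_bound {φ : Euc d → ℝ} (h : ContDiff ℝ (⊤ : ℕ∞) φ) (hc : HasCompactSupport φ)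
    (l : List (Fin d)) : ∃ C : ℝ, ∀ δ : ℝ, 0 < δ → ∀ x,
      ‖Dl l (mollify φ δ) x‖ ≤ C * (δ ^ (d + l.length))⁻¹ := by
  obtain ⟨C, hC⟩ := (Dl_compact hc l).exists_bound_of_continuous (contDiff_Dl h l).continuous
  refine ⟨C, fun δ hδ x => ?_⟩
  have := congrFun (Dl_scale h ((δ ^ d)⁻¹) δ⁻¹ l) x
  have e : mollify φ δ = fun x => (δ ^ d)⁻¹ • φ (δ⁻¹ • x) := rfl
  rw [e, this, norm_smul, mul_comm C, pow_add, mul_inv, inv_pow, Real.norm_of_nonneg (by positivity)]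
  exact mul_le_mul_of_nonneg_left (hC _) (by positivity)

theorem exists_cutoff {K Ω : Set (Euc d)} (hK : IsCompact K) (hΩ : IsOpen Ω) (h : K ⊆ Ω) :
    ∃ (χ : Euc d → ℝ) (S U : Set (Euc d)), ContDiff ℝ (⊤ : ℕ∞) χ ∧ IsCompact S ∧ S ⊆ Ω ∧
      (∀ x ∉ S, χ x = 0) ∧ IsOpen U ∧ K ⊆ U ∧ U ⊆ Ω ∧ (∀ x ∈ U, χ x = 1) ∧ ∀ x, ‖χ x‖ ≤ 1 := by
  obtain ⟨S, hS, hKS, hSΩ⟩ := exists_compact_between hK hΩ h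
  obtain ⟨f, h1, h2, h3⟩ := exists_contMDiffMap_one_nhds_of_subset_interior (modelWithCornersSelf ℝ (Euc d)) 
    (n := (⊤ : ℕ∞)) hK.isClosed hKS
  obtain ⟨V, hV, hKV, hV1⟩ := mem_nhdsSet_iff_exists.1 h1
  refine ⟨f, S, V ∩ Ω, f.contMDiff.contDiff, hS, hSΩ, h2, hV.inter hΩ, subset_inter hKV h,
    inter_subset_right, fun x hx => hV1 hx.1, fun x => ?_⟩
  rw [Real.norm_of_nonneg (h3 x).1]; exact (h3 x).2

theorem cutoff_contDiff {χ : Euc d → ℝ} {S Ω : Set (Euc d)} (hΩ : IsOpen Ω) (hχ : ContDiff ℝ (⊤ : ℕ∞) χ)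
    (hS : IsCompact S) (hSΩ : S ⊆ Ω) (hz : ∀ x ∉ S, χ x = 0) {u : Euc d → ℂ}
    (hu : ContDiffOn ℝ (⊤ : ℕ∞) u Ω) : ContDiff ℝ (⊤ : ℕ∞) (fun x => χ x • u x) := by
  rw [contDiff_iff_contDiffAt]
  intro x
  by_cases hx : x ∈ S
  · exact hχ.contDiffAt.smul (hu.contDiffAt (hΩ.mem_nhds (hSΩ hx)))
  · have : (fun x => χ x • u x) =ᶠ[𝓝 x] fun _ => 0 := by
      filter_upwards [hS.isClosed.isOpen_compl.mem_nhds hx] with y hy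
      rw [hz y hy, zero_smul]
    exact contDiffAt_const.congr_of_eventuallyEq this
def SmoothNet (Ω : Set (Euc d)) (u : ℝ → Euc d → ℂ) : Prop :=
  ∀ ε ∈ Set.Ioo (0:ℝ) 1, ContDiffOn ℝ (⊤ : ℕ∞) (u ε) Ω

def PB (α : Fin d → ℕ) (K : Set (Euc d)) (u : ℝ → Euc d → ℂ) (b : ℝ) : Prop :=
  ∀ᶠ ε in 𝓝[>] (0:ℝ), ∀ x ∈ K, ‖partialDeriv α (u ε) x‖ ≤ ε ^ b

theorem PB_iff {Ω : Set (Euc d)} (hΩ : IsOpen Ω) {u : ℝ → Euc d → ℂ} (hu : SmoothNet Ω u)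
    {K : Set (Euc d)} (hK : IsCompact K) (hKΩ : K ⊆ Ω) (α : Fin d → ℕ) (b : ℝ) :
    (SmallE fun ε => pSemi α K (u ε) ≤ ε ^ b) ↔ PB α K u b := by
  rw [smallE_iff]
  constructor
  · intro h
    filter_upwards [h, ev_Ioo] with ε h h0 x hx
    refine le_trans (le_csSup ?_ (mem_image_of_mem (fun x => ‖partialDeriv α (u ε) x‖) hx)) h
    refine (hK.image_of_continuousOn ?_).bddAbove
    rw [partialDeriv_eq]
    exact ((Dl_contDiffOn hΩ (hu ε h0) _).continuousOn.mono hKΩ).norm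
  · intro h
    filter_upwards [h, ev_Ioo] with ε h h0
    refine Real.sSup_le ?_ (Real.rpow_nonneg h0.1.le _)
    rintro _ ⟨x, hx, rfl⟩
    exact h x hx

theorem partialDeriv_sub' {Ω : Set (Euc d)} (hΩ : IsOpen Ω) {f g : Euc d → ℂ}
    (hf : ContDiffOn ℝ (⊤ : ℕ∞) f Ω) (hg : ContDiffOn ℝ (⊤ : ℕ∞) g Ω) (α : Fin d → ℕ)
    {x : Euc d} (hx : x ∈ Ω) :
    partialDeriv α (fun x => f x - g x) x = partialDeriv α f x - partialDeriv α g x := by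
  simp only [partialDeriv_eq]
  exact Dl_sub hΩ hf hg _ hx

theorem PB_mono {α : Fin d → ℕ} {K : Set (Euc d)} {u : ℝ → Euc d → ℂ} {b b' : ℝ} (h : PB α K u b)
    (hb : b' ≤ b) : PB α K u b' := by
  filter_upwards [h, ev_Ioo] with ε h h0 x hx
  exact (h x hx).trans (Real.rpow_le_rpow_of_exponent_ge h0.1 h0.2.le hb)

theorem PB_sub {Ω : Set (Euc d)} (hΩ : IsOpen Ω) {u v : ℝ → Euc d → ℂ} (hu : SmoothNet Ω u)
    (hv : SmoothNet Ω v) {K : Set (Euc d)} (hKΩ : K ⊆ Ω) {α : Fin d → ℕ} {b b' : ℝ} (hb : b' < b)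
    (h1 : PB α K u b) (h2 : PB α K v b) : PB α K (fun ε x => u ε x - v ε x) b' := by
  filter_upwards [h1, h2, ev_Ioo, ev_const_mul 2 hb] with ε h1 h2 h0 h3 x hx
  rw [partialDeriv_sub' hΩ (hu ε h0) (hv ε h0) α (hKΩ hx)]
  refine (norm_sub_le _ _).trans ?_
  linarith [h1 x hx, h2 x hx]

theorem SmoothNet.sub {Ω : Set (Euc d)} {u v : ℝ → Euc d → ℂ} (hu : SmoothNet Ω u)
    (hv : SmoothNet Ω v) : SmoothNet Ω (fun ε x => u ε x - v ε x) :=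
  fun ε h => (hu ε h).sub (hv ε h)

theorem negligible_iff {Ω : Set (Euc d)} (hΩ : IsOpen Ω) {u : ℝ → Euc d → ℂ} :
    Negligible Ω u ↔ SmoothNet Ω u ∧ ∀ K : Set (Euc d), IsCompact K → K ⊆ Ω → ∀ α : Fin d → ℕ,
      ∀ m : ℕ, PB α K u m := by
  constructor
  · rintro ⟨h1, h2⟩
    exact ⟨h1, fun K hK hKΩ α m => (PB_iff hΩ h1 hK hKΩ α m).1 (h2 K hK hKΩ α m)⟩
  · rintro ⟨h1, h2⟩
    exact ⟨h1, fun K hK hKΩ α m => (PB_iff hΩ h1 hK hKΩ α m).2 (h2 K hK hKΩ α m)⟩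

theorem moderate_iff {Ω : Set (Euc d)} (hΩ : IsOpen Ω) {u : ℝ → Euc d → ℂ} :
    Moderate Ω u ↔ SmoothNet Ω u ∧ ∀ K : Set (Euc d), IsCompact K → K ⊆ Ω → ∀ α : Fin d → ℕ,
      ∃ m : ℕ, PB α K u (-(m:ℝ)) := by
  constructor
  · rintro ⟨h1, h2⟩
    exact ⟨h1, fun K hK hKΩ α => (h2 K hK hKΩ α).imp fun m => (PB_iff hΩ h1 hK hKΩ α _).1⟩
  · rintro ⟨h1, h2⟩
    exact ⟨h1, fun K hK hKΩ α => (h2 K hK hKΩ α).imp fun m => (PB_iff hΩ h1 hK hKΩ α _).2⟩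

theorem negligible_sub {Ω : Set (Euc d)} (hΩ : IsOpen Ω) {u v : ℝ → Euc d → ℂ}
    (hu : Negligible Ω u) (hv : Negligible Ω v) : Negligible Ω (fun ε x => u ε x - v ε x) := by
  rw [negligible_iff hΩ] at *
  refine ⟨hu.1.sub hv.1, fun K hK hKΩ α m => ?_⟩
  exact PB_sub hΩ hu.1 hv.1 hKΩ (b := ((m+1 : ℕ) : ℝ)) (by push_cast; linarith)
    (hu.2 K hK hKΩ α (m+1)) (hv.2 K hK hKΩ α (m+1))

theorem negligible_zero {Ω : Set (Euc d)} (hΩ : IsOpen Ω) :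
    Negligible Ω (fun _ _ => (0:ℂ)) := by
  rw [negligible_iff hΩ]
  refine ⟨fun _ _ => contDiffOn_const, fun K hK hKΩ α m => ?_⟩
  filter_upwards [ev_Ioo] with ε h0 x hx
  have := partialDeriv_sub' (f := fun _ => (0:ℂ)) (g := fun _ => 0) hΩ contDiffOn_const contDiffOn_const α (hKΩ hx)
  simp only [sub_self] at this
  rw [this, norm_zero]
  exact Real.rpow_nonneg h0.1.le _

theorem nulRel_equiv {Ω : Set (Euc d)} (hΩ : IsOpen Ω) : Equivalence (nulRel Ω) := by
  have hs : ∀ {u v : ModNet Ω}, nulRel Ω u v → nulRel Ω v u := by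
    intro u v h
    have := negligible_sub hΩ (negligible_zero hΩ) h
    simpa [nulRel] using this
  refine ⟨fun u => ?_, hs, fun {u v w} h1 h2 => ?_⟩
  · simpa [nulRel] using negligible_zero hΩ
  · have := negligible_sub hΩ h1 (hs h2)
    simpa [nulRel] using this

theorem nulRel_out {Ω : Set (Euc d)} (hΩ : IsOpen Ω) (v : ModNet Ω) :
    nulRel Ω (Quot.out (Quot.mk (nulRel Ω) v)) v := by
  have h : Quot.mk (nulRel Ω) (Quot.out (Quot.mk (nulRel Ω) v)) = Quot.mk (nulRel Ω) v := Quot.out_eq _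
  have := Quot.eqvGen_exact h
  exact ((nulRel_equiv hΩ).eqvGen_iff).1 this

theorem sharpNorm_lt {z : ℝ → ℂ} {r b : ℝ} (hr : 0 < r) (hb : -Real.log r < b)
    (h : SmallE fun ε => ‖z ε‖ ≤ ε ^ b) : sharpNorm z < r := by
  unfold sharpNorm
  split_ifs with ht
  · exact hr
  have h1 : (b : EReal) ≤ valuation z := le_sSup (mem_image_of_mem _ h)
  have h2 : b ≤ (valuation z).toReal := by
    have := EReal.toReal_le_toReal h1 (EReal.coe_ne_bot _) ht
    simpa using this
  rw [← Real.lt_log_iff_exp_lt hr]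
  linarith

theorem exists_of_sharpNorm_lt {z : ℝ → ℂ} {r b₀ : ℝ} (hr : 0 < r)
    (h0 : SmallE fun ε => ‖z ε‖ ≤ ε ^ b₀) (h : sharpNorm z < r) :
    ∃ b : ℝ, -Real.log r < b ∧ SmallE fun ε => ‖z ε‖ ≤ ε ^ b := by
  have hlt : ((-Real.log r : ℝ) : EReal) < valuation z := by
    unfold sharpNorm at h
    split_ifs at h with ht
    · rw [ht]; exact EReal.coe_lt_top _
    have h1 : (b₀ : EReal) ≤ valuation z := le_sSup (mem_image_of_mem _ h0)
    have hbot : valuation z ≠ ⊥ := fun hb => by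
      rw [hb] at h1; exact EReal.coe_ne_bot _ (le_bot_iff.1 h1)
    rw [← EReal.coe_toReal ht hbot]
    rw [← Real.lt_log_iff_exp_lt hr] at h
    exact_mod_cast (by linarith : -Real.log r < (valuation z).toReal)
  obtain ⟨_, ⟨b, hb, rfl⟩, h3⟩ := lt_sSup_iff.1 hlt
  exact ⟨b, EReal.coe_lt_coe_iff.1 h3, hb⟩

def Close (Ω : Set (Euc d)) (K : Set (Euc d)) (m : ℕ) (u v : Colombeau Ω) : Prop :=
  ∀ α : Fin d → ℕ, α ≤ (fun _ => m) →
    PB α K (fun ε x => (Quot.out u).1 ε x - (Quot.out v).1 ε x) m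

theorem Close.mono {Ω K K' : Set (Euc d)} {m m' : ℕ} {u v : Colombeau Ω} (h : Close Ω K' m' u v)
    (hK : K ⊆ K') (hm : m ≤ m') : Close Ω K m u v := by
  intro α hα
  have := PB_mono (h α (hα.trans fun _ => hm)) (b' := m) (by exact_mod_cast hm)
  filter_upwards [this] with ε h x hx using h x (hK hx)

theorem smoothNet_out {Ω : Set (Euc d)} (u : Colombeau Ω) : SmoothNet Ω (Quot.out u).1 :=
  (Quot.out u).2.1

theorem close_basic {Ω : Set (Euc d)} (hΩ : IsOpen Ω) (u w : Colombeau Ω) (α : Fin d → ℕ)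
    {K : Set (Euc d)} (hK : IsCompact K) (hKΩ : K ⊆ Ω) {r : ℝ} (hr : 0 < r)
    (h : PNormDiff Ω α K w u < r) :
    ∃ m : ℕ, ∀ v, Close Ω K m u v → PNormDiff Ω α K w v < r := by
  have hn : ∀ u v : Colombeau Ω, ∀ b : ℝ, (SmallE fun ε =>
      ‖((pSemi α K (fun x => (Quot.out u).1 ε x - (Quot.out v).1 ε x) : ℝ) : ℂ)‖ ≤ ε ^ b) ↔
      PB α K (fun ε x => (Quot.out u).1 ε x - (Quot.out v).1 ε x) b := by
    intro u v b
    rw [← PB_iff hΩ ((smoothNet_out u).sub (smoothNet_out v)) hK hKΩ]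
    have : ∀ ε : ℝ, ‖((pSemi α K (fun x => (Quot.out u).1 ε x - (Quot.out v).1 ε x) : ℝ) : ℂ)‖ = 
       pSemi α K (fun x => (Quot.out u).1 ε x - (Quot.out v).1 ε x) := by
      intro ε
      rw [Complex.norm_real, Real.norm_of_nonneg]
      apply Real.sSup_nonneg
      rintro _ ⟨x, _, rfl⟩
      exact norm_nonneg _
    simp only [this]
  obtain ⟨N1, h1⟩ := ((moderate_iff hΩ).1 (Quot.out u).2).2 K hK hKΩ α
  obtain ⟨N2, h2⟩ := ((moderate_iff hΩ).1 (Quot.out w).2).2 K hK hKΩ α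
  have h3 : PB α K (fun ε x => (Quot.out w).1 ε x - (Quot.out u).1 ε x) (-((N1:ℝ)+N2)-1) :=
    PB_sub hΩ (smoothNet_out w) (smoothNet_out u) hKΩ (b := -((N1:ℝ)+N2)) (by linarith)
     (PB_mono h2 (by linarith [N1.cast_nonneg (α := ℝ)])) (PB_mono h1 (by linarith [N2.cast_nonneg (α := ℝ)]))
  obtain ⟨b, hb, hb2⟩ := exists_of_sharpNorm_lt hr ((hn w u _).2 h3) h
  rw [hn] at hb2
  obtain ⟨n, hn'⟩ := exists_nat_ge b
  refine ⟨max n (∑ i, α i), fun v hv => ?_⟩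
  obtain ⟨b', hb1', hb2'⟩ := exists_between hb
  refine sharpNorm_lt hr hb1' ((hn w v b').2 ?_)
  have h4 := hv α (fun i => (Finset.single_le_sum (f := α) (fun _ _ => Nat.zero_le _) (Finset.mem_univ i)).trans (le_max_right _ _))
  have h4' := PB_mono h4 (b' := b) (hn'.trans (by exact_mod_cast le_max_left _ _))
  filter_upwards [hb2, h4', ev_Ioo, ev_const_mul 2 hb2'] with ε h1 h2 h0 h3 x hx
  have e1 := h1 x hx
  have e2 := h2 x hx
  have hxΩ := hKΩ hx
  rw [partialDeriv_sub' hΩ (smoothNet_out _ ε h0) (smoothNet_out _ ε h0) α hxΩ] at e1 e2 ⊢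
  have := norm_add_le_of_le e1 e2
  rw [sub_add_sub_cancel] at this
  linarith

theorem close_open {Ω : Set (Euc d)} (hΩ : IsOpen Ω) (V : Set (Colombeau Ω))
    (hV : @IsOpen _ (sharpTopology Ω) V) (u : Colombeau Ω) (hu : u ∈ V) :
    ∃ (K : Set (Euc d)) (m : ℕ), IsCompact K ∧ K ⊆ Ω ∧ ∀ v, Close Ω K m u v → v ∈ V := by
  have hV' : TopologicalSpace.GenerateOpen {S | ∃ (u : Colombeau Ω) (α : Fin d → ℕ) (K : Set (Euc d)) (r : ℝ),
      IsCompact K ∧ K ⊆ Ω ∧ 0 < r ∧ S = {v | PNormDiff Ω α K u v < r}} V := hV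
  clear hV
  induction hV' with
  | basic S hS =>
    obtain ⟨w, α, K, r, hK, hKΩ, hr, rfl⟩ := hS
    obtain ⟨m, hm⟩ := close_basic hΩ u w α hK hKΩ hr hu
    exact ⟨K, m, hK, hKΩ, hm⟩
  | univ => exact ⟨∅, 0, isCompact_empty, empty_subset _, fun _ _ => mem_univ _⟩
  | inter s t _ _ ih1 ih2 =>
    obtain ⟨K1, m1, a1, b1, c1⟩ := ih1 hu.1
    obtain ⟨K2, m2, a2, b2, c2⟩ := ih2 hu.2
    exact ⟨K1 ∪ K2, max m1 m2, a1.union a2, union_subset b1 b2, fun v hv =>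
      ⟨c1 v (hv.mono subset_union_left (le_max_left _ _)), c2 v (hv.mono subset_union_right (le_max_right _ _))⟩⟩
  | sUnion S _ ih =>
    obtain ⟨s, hs, hus⟩ := hu
    obtain ⟨K, m, a, b, c⟩ := ih s hs hus
    exact ⟨K, m, a, b, fun v hv => ⟨s, hs, c v hv⟩⟩
theorem approx {Ω : Set (Euc d)} (hΩ : IsOpen Ω) {u : ℝ → Euc d → ℂ} (hu : Moderate Ω u)
    {K : Set (Euc d)} (hK : IsCompact K) (hKΩ : K ⊆ Ω) (m : ℕ) :
    ∃ v : ℝ → Euc d → ℂ, SmoothNet Ω v ∧ (∃ c k : ℝ, ∀ α : Fin d → ℕ,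
      PB α univ v (-c - k * (∑ i, α i : ℕ))) ∧
      ∀ α : Fin d → ℕ, α ≤ (fun _ => m) → PB α K (fun ε x => u ε x - v ε x) m := by
  obtain ⟨hus, hum⟩ := (moderate_iff hΩ).1 hu
  obtain ⟨η, hη, hηΩ⟩ := hK.exists_cthickening_subset_open hΩ hKΩ
  have hK' : IsCompact (cthickening η K) := hK.cthickening
  obtain ⟨χ, S, U, hχ, hS, hSΩ, hz, hU, hKU, hUΩ, hχ1, hχb⟩ := exists_cutoff hK' hΩ hηΩ
  obtain ⟨φ, hφ, hφc, hφ0, hφ1, hφs⟩ := exists_kernel d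
  choose N hN using hum (cthickening η K) hK' hηΩ
  obtain ⟨N0, hN0⟩ := hum S hS hSΩ 0
  set M : ℕ := (Finset.Iic (fun _ : Fin d => m + 1)).sup N with hM
  set k : ℕ := M + m + 1 with hk
  set W : ℝ → Euc d → ℂ := fun ε x => χ x • u ε x with hW
  have hWs : ∀ ε ∈ Ioo (0:ℝ) 1, ContDiff ℝ (⊤ : ℕ∞) (W ε) := fun ε h0 =>
    cutoff_contDiff hΩ hχ hS hSΩ hz (hus ε h0)
  have hWz : ∀ ε, ∀ x ∉ S, W ε x = 0 := fun ε x hx => by simp [hW, hz x hx]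
  have hWc : ∀ ε, HasCompactSupport (W ε) := fun ε => HasCompactSupport.intro hS (hWz ε)
  set v : ℝ → Euc d → ℂ := fun ε =>
    (mollify φ (ε ^ k)) ⋆[ContinuousLinearMap.lsmul ℝ ℝ, volume] (W ε) with hv
  have hvs : ∀ ε ∈ Ioo (0:ℝ) 1, ContDiff ℝ (⊤ : ℕ∞) (v ε) := fun ε h0 =>
    (mollify_compact hφs (pow_pos h0.1 k)).contDiff_convolution_left _ (mollify_contDiff hφ _)
      (hWs ε h0).continuous.locallyIntegrable
  have hvs' : SmoothNet Ω v := fun ε h0 => (hvs ε h0).contDiffOn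
  refine ⟨v, hvs', ⟨N0 + k * d + 1, k, fun α => ?_⟩, fun α hα => ?_⟩
  · obtain ⟨C, hC⟩ := mollify_Dl_bound hφ hφc (mlist α)
    filter_upwards [ev_Ioo, hN0, ev_const_mul (C * volume.real S)
      (b := -(N0:ℝ) - k * d - k * (∑ i, α i : ℕ)) (b' := -(N0 + k * d + 1 : ℝ) - k * (∑ i, α i : ℕ))
      (by linarith)] with ε h0 hB hle x _
    have hB' : ∀ x ∈ S, ‖W ε x‖ ≤ ε ^ (-(N0:ℝ)) := by
      intro x hx
      have h1 := hB x hx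
      have h2 : partialDeriv 0 (u ε) = u ε := by
        have : mlist (0 : Fin d → ℕ) = [] := by simp [mlist]
        rw [partialDeriv_eq, this, Dl_nil]
      rw [h2] at h1
      rw [hW]; simp only [norm_smul]
      calc _ ≤ 1 * ‖u ε x‖ := mul_le_mul_of_nonneg_right (hχb x) (norm_nonneg _)
        _ ≤ _ := by rwa [one_mul]
    rw [partialDeriv_eq, hv, Dl_conv_left (hWs ε h0).continuous (mollify_contDiff hφ _)
      (mollify_compact hφs (pow_pos h0.1 k))]
    refine (conv_bound hS (hC _ (pow_pos h0.1 k)) hB' (hWz ε) x).trans (le_trans (le_of_eq ?_) hle)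
    rw [mlist_length, ← pow_mul, ← Real.rpow_natCast, ← Real.rpow_neg h0.1.le]
    have : -(N0:ℝ) - k * d - k * (∑ i, α i : ℕ) = (-((k * (d + ∑ i, α i) : ℕ) : ℝ)) + (-(N0:ℝ)) := by
      push_cast; ring
    rw [this, Real.rpow_add h0.1]
    ring
  · have hder : ∀ i, PB (fun j => (i :: mlist α).count j) (cthickening η K) u (-(M:ℝ)) := by
      intro i
      refine PB_mono (hN _) ?_
      have : N (fun j => (i :: mlist α).count j) ≤ M := by
        refine Finset.le_sup (f := N) ?_
        rw [Finset.mem_Iic]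
        intro j
        change (i :: mlist α).count j ≤ m + 1
        rw [List.count_cons, mlist_count]
        have := hα j
        simp only at this
        split_ifs <;> omega
      have : (N (fun j => (i :: mlist α).count j) : ℝ) ≤ M := by exact_mod_cast this
      linarith
    have hδ : ∀ᶠ ε in 𝓝[>] (0:ℝ), ε ^ k ≤ η := by
      have : Tendsto (fun ε : ℝ => ε ^ k) (𝓝[>] 0) (𝓝 0) := by
        have := ((continuous_pow (M := ℝ) k).tendsto 0).mono_left (nhdsWithin_le_nhds (s := Ioi 0))
        rwa [zero_pow (by omega)] at this
      exact this.eventually_le_const hη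
    filter_upwards [ev_Ioo, hδ, eventually_all.2 hder, ev_const_mul (d:ℝ) (b := (m:ℝ)+1) (b' := m) (by linarith)] with
      ε h0 hδ hder hle x hx
    have hδ0 := pow_pos h0.1 k
    rw [partialDeriv_sub' hΩ (hus ε h0) (hvs' ε h0) α (hKΩ hx)]
    have hWu : EqOn (W ε) (u ε) U := fun y hy => by simp [hW, hχ1 y hy]
    have hxc : x ∈ cthickening η K := self_subset_cthickening _ hx
    rw [partialDeriv_eq, partialDeriv_eq, ← Dl_congr hU hWu _ (hKU hxc), hv,
      Dl_conv_right (mollify_contDiff hφ _).continuous (hWs ε h0) (hWc ε), ← dist_eq_norm, dist_comm]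
    have hsub : ball x (ε ^ k) ⊆ cthickening η K := fun y hy => by
      refine thickening_subset_cthickening _ _ (mem_thickening_iff.2 ⟨x, hx, ?_⟩)
      exact lt_of_lt_of_le hy hδ
    have hfd : ∀ y ∈ ball x (ε ^ k), ‖fderiv ℝ (Dl (mlist α) (W ε)) y‖ ≤ d * ε ^ (-(M:ℝ)) := by
      intro y hy
      refine norm_clm_le _ fun i => ?_
      have h1 := hder i y (hsub hy)
      rw [partialDeriv_eq, ← Dl_perm hΩ (hus ε h0) (mlist_perm (i :: mlist α)) (hηΩ (hsub hy)),
        ← Dl_congr hU hWu _ (hKU (hsub hy))] at h1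
      exact h1
    refine dist_convolution_le (R := ε ^ k) (Real.rpow_nonneg h0.1.le _) (mollify_support hφs hδ0)
      (fun y => mul_nonneg (inv_nonneg.2 (pow_nonneg hδ0.le _)) (hφ0 _)) (mollify_integral hφ1 hδ0)
      (contDiff_Dl (hWs ε h0) _).continuous.aestronglyMeasurable fun y hy => ?_
    have h2 := (convex_ball x (ε ^ k)).norm_image_sub_le_of_norm_fderiv_le
      (fun z _ => (contDiff_Dl (hWs ε h0) (mlist α)).contDiffAt.differentiableAt (by simp)) hfd
      (mem_ball_self hδ0) hy
    rw [dist_eq_norm]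
    refine h2.trans (le_trans ?_ hle)
    have h3 : ‖y - x‖ ≤ ε ^ k := by rw [← dist_eq_norm]; exact (mem_ball.1 hy).le
    have h4 : (0:ℝ) ≤ ε ^ (-(M:ℝ)) := Real.rpow_nonneg h0.1.le _
    calc (d:ℝ) * ε ^ (-(M:ℝ)) * ‖y - x‖ ≤ d * ε ^ (-(M:ℝ)) * ε ^ k := 
          mul_le_mul_of_nonneg_left h3 (by positivity)
      _ = d * ε ^ ((m:ℝ)+1) := by
        rw [mul_assoc, ← Real.rpow_natCast, ← Real.rpow_add h0.1]
        congr 2; rw [hk]; push_cast; ring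
/-- the subalgebra of sublinear generalized functions is dense
in 𝒢(Ω) for the sharp topology. -/
theorem sublinear_dense {d : ℕ} (Ω : Set (Euc d)) (hΩ : IsOpen Ω) :
    @Dense (Colombeau Ω) (sharpTopology Ω) {u : Colombeau Ω | Sublinear Ω u} := by
  letI := sharpTopology Ω
  rw [dense_iff_inter_open]
  rintro V hV ⟨u, hu⟩
  obtain ⟨K, m, hK, hKΩ, hc⟩ := close_open hΩ V hV u hu
  obtain ⟨v, hvs, ⟨c, k, hb⟩, hcl⟩ := approx hΩ (Quot.out u).2 hK hKΩ (m + 1)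
  have hvm : Moderate Ω v := by
    refine (moderate_iff hΩ).2 ⟨hvs, fun L hL hLΩ α => ?_⟩
    obtain ⟨n, hn⟩ := exists_nat_ge (c + k * (∑ i, α i : ℕ))
    refine ⟨n, ?_⟩
    have := PB_mono (hb α) (b' := -(n:ℝ)) (by linarith)
    filter_upwards [this] with ε h x _ using h x (mem_univ _)
  refine ⟨Quot.mk _ ⟨v, hvm⟩, hc _ fun α hα => ?_, ⟨v, hvm⟩, rfl, fun L hL hLΩ x hx => ?_⟩
  · have h1 := hcl α (hα.trans fun _ => Nat.le_succ m)
    have h2 := nulRel_out hΩ ⟨v, hvm⟩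
    have h3 := (negligible_iff hΩ).1 h2
    have h4 := PB_sub hΩ ((smoothNet_out u).sub hvs) h3.1 hKΩ (b' := m) (by push_cast; linarith) h1
      (h3.2 K hK hKΩ α (m+1))
    simpa using h4
  · refine ⟨k + 1, fun n => -c - k * n, ?_, fun α => ?_⟩
    · have : (fun n : ℕ => -c - k * n + (k + 1) * n) = fun n : ℕ => -c + (n:ℝ) := by
        funext n; ring
      rw [this]
      exact tendsto_atTop_add_const_left _ _ tendsto_natCast_atTop_atTop
    · rw [smallE_iff]
      filter_upwards [hb α] with ε h using h _ (mem_univ _)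

end
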